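/- Semi-discrete wave equation for the scalar potential (component form): Let ε₀, μ₀ ∈ ℝ with ε₀ ≠ 0, and let Φ : ℝ → ℤ³ → ℝ be twice differentiable in t at every lattice point, A¹,A²,A³ : ℝ → ℤ³ → ℝ differentiable in t at every lattice point, and D¹²,D¹³,D²³, Q : ℝ → ℤ³ → ℝ. Define Eⁱ(t,p) = −(ΔᵢΦ)(t,p) − ∂ₜAⁱ(t,p) for i = 1,2,3. Assume for all t and (k,s,m): (Gauss law) (Δ₁D²³)(k,s,m) − (Δ₂D¹³)(k,s,m) + (Δ₃D¹²)(k,s,m) = Q(k,s,m); (D = ε₀∗E) D¹²(t,k,s,m) = ε₀E³(t,k,s,m−1), D¹³(t,k,s,m) = −ε₀E²(t,k,s−1,m), D²³(t,k,s,m) = ε₀E¹(t,k−1,s,m); (Lorentz gauge) (Δ₁A¹)(t,k−1,s,m) + (Δ₂A²)(t,k,s−1,m) + (Δ₃A³)(t,k,s,m−1) + μ₀ε₀·∂ₜΦ(t,k,s,m) = 0. Then for all t and (k,s,m): −(Δ₁²Φ)(k−1,s,m) − (Δ₂²Φ)(k,s−1,m) − (Δ₃²Φ)(k,s,m−1) +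 μ₀ε₀·∂ₜ²Φ(k,s,m) = (1/ε₀)·Q(k,s,m), where Δᵢ² = Δᵢ∘Δᵢ and all components are evaluated at time t. -/

import Mathlib

/-- Forward difference in the first variable on `ℤ³`. -/
def d1 (f : ℤ → ℤ → ℤ → ℝ) (k s m : ℤ) : ℝ := f (k + 1) s m - f k s m

/-- Forward difference in the second variable on `ℤ³`. -/
def d2 (f : ℤ → ℤ → ℤ → ℝ) (k s m : ℤ) : ℝ := f k (s + 1) m - f k s m

/-- Forward difference in the third variable on `ℤ³`. -/
def d3 (f : ℤ → ℤ → ℤ → ℝ) (k s m : ℤ) : ℝ := f k s (m + 1) - f k s m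

/-!
By the constitutive relation, Gauss's law says that `ε₀` times the *backward* divergence of `E` is
`Q`, because a forward difference taken after a backward shift is a backward difference.
Substituting `E = -grad Φ - ∂ₜA` gives `-ΔΦ - ∂ₜ(div A) = Q / ε₀`, and differentiating the Lorentz
gauge in time replaces `-∂ₜ(div A)` by `μ₀ ε₀ ∂ₜ²Φ`. Nothing here depends on the dimension, so the
argument takes place on an abelian group with a finite family of edge directions.
-/

open scoped fwdDiff

section Static

variable {R M F ι : Type*} [Ring R] [AddCommGroup M] [AddCommGroup F] [Module R F]

/-- The gradient of a discrete scalar field on a lattice `M` whose edges point in the directions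
`e i`: the 1-form with value `f (p + e i) - f p` on the edge from `p` to `p + e i`. -/
def latticeGrad (e : ι → M) (f : M → F) (i : ι) : M → F := Δ_[e i] f

variable [Fintype ι]

variable (R) in
/-- The backward divergence `∑ i, (X i p - X i (p - e i))` of a discrete 1-form, the negative of the
adjoint of `latticeGrad`. Each summand is written as a forward difference based at `p - e i`. -/
def latticeDiv (e : ι → M) : (ι → M → F) →ₗ[R] M → F where
  toFun X p := ∑ i, Δ_[e i] (X i) (p - e i)
  map_add' X Y := by
    ext p
    simp [Finset.sum_add_distrib]
  map_smul' c X := by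
    ext p
    simp [Finset.smul_sum]

variable (R) in
/-- The discrete Laplacian `∑ i, (f (p + e i) - 2 f p + f (p - e i))`. -/
def latticeLaplacian (e : ι → M) (f : M → F) : M → F := latticeDiv R e (latticeGrad e f)

theorem latticeDiv_apply (e : ι → M) (X : ι → M → F) (p : M) :
    latticeDiv R e X p = ∑ i, Δ_[e i] (X i) (p - e i) :=
  rfl

theorem sum_fwdDiff_comp_sub_eq_latticeDiv (e : ι → M) (X : ι → M → F) (p : M) :
    ∑ i, Δ_[e i] (fun q ↦ X i (q - e i)) p = latticeDiv R e X p := by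
  simp only [sub_eq_add_neg, fwdDiff_comp_add, latticeDiv_apply]

theorem latticeDiv_smul_eq_of_gauss {e : ι → M} {ε : R} {D E : ι → M → F} {Q : M → F}
    (hD : ∀ i p, D i p = ε • E i (p - e i)) (hGauss : ∀ p, ∑ i, Δ_[e i] (D i) p = Q p) :
    ε • latticeDiv R e E = Q := by
  ext p
  have hD' : ∀ i, D i = fun q ↦ (ε • E) i (q - e i) := fun i ↦ funext (hD i)
  rw [← hGauss p, ← map_smul, ← sum_fwdDiff_comp_sub_eq_latticeDiv]
  simp only [hD']

theorem latticeDiv_neg_grad_sub (e : ι → M) (f : M → F) (X : ι → M → F) :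
    latticeDiv R e (-latticeGrad e f - X) = -latticeLaplacian R e f - latticeDiv R e X := by
  rw [map_sub, map_neg, latticeLaplacian]

end Static

section Dynamic

variable {𝕜 M F ι : Type*} [NontriviallyNormedField 𝕜] [AddCommGroup M] [NormedAddCommGroup F]
  [NormedSpace 𝕜 F] [Fintype ι]

theorem hasDerivAt_latticeDiv {e : ι → M} {X : 𝕜 → ι → M → F} {X' : ι → M → F} {t : 𝕜}
    (hX : ∀ i p, HasDerivAt (fun u ↦ X u i p) (X' i p) t) (p : M) :
    HasDerivAt (fun u ↦ latticeDiv 𝕜 e (X u) p) (latticeDiv 𝕜 e X' p) t :=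
  HasDerivAt.fun_sum fun i _ ↦ (hX i (p - e i + e i)).sub (hX i (p - e i))

theorem latticeDiv_deriv_add_eq_zero_of_gauge {e : ι → M} {c : 𝕜} {A : 𝕜 → ι → M → F}
    {A' : ι → M → F} {ψ : 𝕜 → F} {ψ' : F} {t : 𝕜} {p : M}
    (hA : ∀ i q, HasDerivAt (fun u ↦ A u i q) (A' i q) t) (hψ : HasDerivAt ψ ψ' t)
    (hGauge : ∀ u, latticeDiv 𝕜 e (A u) p + c • ψ u = 0) :
    latticeDiv 𝕜 e A' p + c • ψ' = 0 := by
  have hDeriv := (hasDerivAt_latticeDiv (e := e) hA p).add (hψ.const_smul c)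
  exact hDeriv.unique ((hasDerivAt_const t (0 : F)).congr_of_eventuallyEq (.of_forall hGauge))

theorem stmt12_general (e : ι → M) {ε₀ μ₀ : 𝕜} (hε₀ : ε₀ ≠ 0) {Φ Φ' Φ'' Q : 𝕜 → M → F}
    {A A' D E : 𝕜 → ι → M → F}
    (_hΦ : ∀ t p, HasDerivAt (fun u ↦ Φ u p) (Φ' t p) t)
    (hΦ' : ∀ t p, HasDerivAt (fun u ↦ Φ' u p) (Φ'' t p) t)
    (hA : ∀ t i p, HasDerivAt (fun u ↦ A u i p) (A' t i p) t)
    (hE : ∀ t, E t = -latticeGrad e (Φ t) - A' t)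
    (hGauss : ∀ t p, ∑ i, Δ_[e i] (D t i) p = Q t p)
    (hD : ∀ t i p, D t i p = ε₀ • E t i (p - e i))
    (hGauge : ∀ t p, latticeDiv 𝕜 e (A t) p + (μ₀ * ε₀) • Φ' t p = 0) (t : 𝕜) (p : M) :
    -latticeLaplacian 𝕜 e (Φ t) p + (μ₀ * ε₀) • Φ'' t p = ε₀⁻¹ • Q t p := by
  have gauss : latticeDiv 𝕜 e (E t) = ε₀⁻¹ • Q t :=
    (eq_inv_smul_iff₀ hε₀).2 (latticeDiv_smul_eq_of_gauss (hD t) (hGauss t))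
  have gauge : latticeDiv 𝕜 e (A' t) p + (μ₀ * ε₀) • Φ'' t p = 0 :=
    latticeDiv_deriv_add_eq_zero_of_gauge (hA t) (hΦ' t p) (hGauge · p)
  calc
    -latticeLaplacian 𝕜 e (Φ t) p + (μ₀ * ε₀) • Φ'' t p
      = (-latticeLaplacian 𝕜 e (Φ t) - latticeDiv 𝕜 e (A' t)) p := by
        rw [eq_neg_of_add_eq_zero_right gauge, ← sub_eq_add_neg, Pi.sub_apply, Pi.neg_apply]
    _ = latticeDiv 𝕜 e (E t) p := by rw [hE, latticeDiv_neg_grad_sub]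
    _ = ε₀⁻¹ • Q t p := by rw [gauss, Pi.smul_apply]

end Dynamic

section Cubic

open Function

/-- The three edge directions of the cubic lattice `ℤ³`. -/
def cubicStep : Fin 3 → ℤ × ℤ × ℤ := ![(1, 0, 0), (0, 1, 0), (0, 0, 1)]

/-- The discrete 1-form on `ℤ³` with components `f`, `g`, `h`, uncurried so that the lattice
calculus on additive groups applies to it. -/
def cubicField (f g h : ℤ → ℤ → ℤ → ℝ) : Fin 3 → ℤ × ℤ × ℤ → ℝ := ![↿f, ↿g, ↿h]

/-- The 2-form on `ℤ³` with components `ω12`, `ω13`, `ω23`, encoded by the components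
`(ω23, -ω13, ω12)` along the dual edges, so that its exterior derivative becomes a forward
divergence. -/
def cubicFlux (ω12 ω13 ω23 : ℤ → ℤ → ℤ → ℝ) : Fin 3 → ℤ × ℤ × ℤ → ℝ :=
  cubicField ω23 (-ω13) ω12

theorem latticeGrad_cubicStep (f : ℤ → ℤ → ℤ → ℝ) :
    latticeGrad cubicStep ↿f = cubicField (d1 f) (d2 f) (d3 f) := by
  ext i ⟨k, s, m⟩
  fin_cases i <;>
    simp [latticeGrad, cubicStep, cubicField, fwdDiff, HasUncurry.uncurry, d1, d2, d3]

theorem latticeDiv_cubicField (f g h : ℤ → ℤ → ℤ → ℝ) (k s m : ℤ) :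
    latticeDiv ℝ cubicStep (cubicField f g h) (k, s, m) =
      d1 f (k - 1) s m + d2 g k (s - 1) m + d3 h k s (m - 1) := by
  simp [latticeDiv_apply, Fin.sum_univ_three, -Finset.sum_sub_distrib, cubicStep, cubicField,
    fwdDiff, HasUncurry.uncurry, d1, d2, d3]

theorem neg_latticeLaplacian_cubicStep (f : ℤ → ℤ → ℤ → ℝ) (k s m : ℤ) :
    -latticeLaplacian ℝ cubicStep ↿f (k, s, m) =
      -d1 (d1 f) (k - 1) s m - d2 (d2 f) k (s - 1) m - d3 (d3 f) k s (m - 1) := by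
  rw [latticeLaplacian, latticeGrad_cubicStep, latticeDiv_cubicField]
  ring

theorem d2_neg (f : ℤ → ℤ → ℤ → ℝ) : d2 (-f) = -d2 f := by
  ext k s m
  simp [d2, neg_add_eq_sub]

theorem sum_fwdDiff_cubicField (f g h : ℤ → ℤ → ℤ → ℝ) (k s m : ℤ) :
    ∑ i, Δ_[cubicStep i] (cubicField f g h i) (k, s, m) = d1 f k s m + d2 g k s m + d3 h k s m := by
  simp [Fin.sum_univ_three, -Finset.sum_sub_distrib, cubicStep, cubicField, fwdDiff,
    HasUncurry.uncurry, d1, d2, d3]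

theorem sum_fwdDiff_cubicFlux (ω12 ω13 ω23 : ℤ → ℤ → ℤ → ℝ) (k s m : ℤ) :
    ∑ i, Δ_[cubicStep i] (cubicFlux ω12 ω13 ω23 i) (k, s, m) =
      d1 ω23 k s m - d2 ω13 k s m + d3 ω12 k s m := by
  simp only [cubicFlux, sum_fwdDiff_cubicField, d2_neg, Pi.neg_apply, sub_eq_add_neg]

theorem cubicFlux_eq_smul_cubicField {ε : ℝ} {D12 D13 D23 E1 E2 E3 : ℤ → ℤ → ℤ → ℝ}
    (h12 : ∀ k s m, D12 k s m = ε * E3 k s (m - 1))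
    (h13 : ∀ k s m, D13 k s m = -(ε * E2 k (s - 1) m))
    (h23 : ∀ k s m, D23 k s m = ε * E1 (k - 1) s m) (i : Fin 3) (p : ℤ × ℤ × ℤ) :
    cubicFlux D12 D13 D23 i p = ε • cubicField E1 E2 E3 i (p - cubicStep i) := by
  fin_cases i <;>
    simp [cubicFlux, cubicField, cubicStep, HasUncurry.uncurry, h12, h13, h23]

theorem cubicField_eq_neg_latticeGrad_sub {φ E1 E2 E3 f g h : ℤ → ℤ → ℤ → ℝ}
    (h1 : ∀ k s m, E1 k s m = -d1 φ k s m - f k s m)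
    (h2 : ∀ k s m, E2 k s m = -d2 φ k s m - g k s m)
    (h3 : ∀ k s m, E3 k s m = -d3 φ k s m - h k s m) :
    cubicField E1 E2 E3 = -latticeGrad cubicStep ↿φ - cubicField f g h := by
  rw [latticeGrad_cubicStep]
  ext i p
  fin_cases i <;> simp [cubicField, HasUncurry.uncurry, h1, h2, h3]

theorem hasDerivAt_cubicField {f g h : ℝ → ℤ → ℤ → ℤ → ℝ}
    {f' g' h' : ℤ → ℤ → ℤ → ℝ} {t : ℝ}
    (hf : ∀ k s m, HasDerivAt (fun u ↦ f u k s m) (f' k s m) t)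
    (hg : ∀ k s m, HasDerivAt (fun u ↦ g u k s m) (g' k s m) t)
    (hh : ∀ k s m, HasDerivAt (fun u ↦ h u k s m) (h' k s m) t) (i : Fin 3) (p : ℤ × ℤ × ℤ) :
    HasDerivAt (fun u ↦ cubicField (f u) (g u) (h u) i p) (cubicField f' g' h' i p) t := by
  fin_cases i
  exacts [hf p.1 p.2.1 p.2.2, hg p.1 p.2.1 p.2.2, hh p.1 p.2.1 p.2.2]

end Cubic

/-- Semi-discrete wave equation for the discrete scalar potential,
in component form. -/
theorem stmt12 (ε₀ μ₀ : ℝ) (hε₀ : ε₀ ≠ 0)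
    (Φ A1 A2 A3 D12 D13 D23 Q : ℝ → ℤ → ℤ → ℤ → ℝ)
    -- Φ is twice differentiable in t
    (hΦ : ∀ k s m : ℤ, Differentiable ℝ fun t => Φ t k s m)
    (hΦ' : ∀ k s m : ℤ, Differentiable ℝ (deriv fun t => Φ t k s m))
    -- the A-components are differentiable in t
    (hA1 : ∀ k s m : ℤ, Differentiable ℝ fun t => A1 t k s m)
    (hA2 : ∀ k s m : ℤ, Differentiable ℝ fun t => A2 t k s m)
    (hA3 : ∀ k s m : ℤ, Differentiable ℝ fun t => A3 t k s m)
    -- the electric field E = −dᶜΦ − ∂ₜA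
    (E1 E2 E3 : ℝ → ℤ → ℤ → ℤ → ℝ)
    (hE1 : ∀ (t : ℝ) (k s m : ℤ),
      E1 t k s m = -d1 (Φ t) k s m - deriv (fun u => A1 u k s m) t)
    (hE2 : ∀ (t : ℝ) (k s m : ℤ),
      E2 t k s m = -d2 (Φ t) k s m - deriv (fun u => A2 u k s m) t)
    (hE3 : ∀ (t : ℝ) (k s m : ℤ),
      E3 t k s m = -d3 (Φ t) k s m - deriv (fun u => A3 u k s m) t)
    -- discrete Gauss law dᶜD = Q
    (hGauss : ∀ (t : ℝ) (k s m : ℤ),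
      d1 (D23 t) k s m - d2 (D13 t) k s m + d3 (D12 t) k s m = Q t k s m)
    -- constitutive relation D = ε₀ ∗E
    (hD12E : ∀ (t : ℝ) (k s m : ℤ), D12 t k s m = ε₀ * E3 t k s (m - 1))
    (hD13E : ∀ (t : ℝ) (k s m : ℤ), D13 t k s m = -(ε₀ * E2 t k (s - 1) m))
    (hD23E : ∀ (t : ℝ) (k s m : ℤ), D23 t k s m = ε₀ * E1 t (k - 1) s m)
    -- Lorentz gauge condition
    (hGauge : ∀ (t : ℝ) (k s m : ℤ),
      d1 (A1 t) (k - 1) s m + d2 (A2 t) k (s - 1) m + d3 (A3 t) k s (m - 1)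
        + μ₀ * ε₀ * deriv (fun u => Φ u k s m) t = 0) :
    ∀ (t : ℝ) (k s m : ℤ),
      -d1 (d1 (Φ t)) (k - 1) s m - d2 (d2 (Φ t)) k (s - 1) m
          - d3 (d3 (Φ t)) k s (m - 1)
          + μ₀ * ε₀ * deriv (deriv fun u => Φ u k s m) t
        = (1 / ε₀) * Q t k s m := by
  intro t k s m
  rw [one_div, ← neg_latticeLaplacian_cubicStep]
  exact stmt12_general cubicStep hε₀ (Φ := fun t ↦ ↿(Φ t)) (Q := fun t ↦ ↿(Q t))
    (fun t p ↦ (hΦ p.1 p.2.1 p.2.2 t).hasDerivAt)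
    (fun t p ↦ (hΦ' p.1 p.2.1 p.2.2 t).hasDerivAt)
    (fun t ↦ hasDerivAt_cubicField (fun k s m ↦ (hA1 k s m t).hasDerivAt)
      (fun k s m ↦ (hA2 k s m t).hasDerivAt) (fun k s m ↦ (hA3 k s m t).hasDerivAt))
    (fun t ↦ cubicField_eq_neg_latticeGrad_sub (hE1 t) (hE2 t) (hE3 t))
    (fun t p ↦ (sum_fwdDiff_cubicFlux ..).trans (hGauss t p.1 p.2.1 p.2.2))
    (fun t ↦ cubicFlux_eq_smul_cubicField (hD12E t) (hD13E t) (hD23E t))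
    (fun t p ↦ by rw [latticeDiv_cubicField]; exact hGauge t p.1 p.2.1 p.2.2)
    t (k, s, m)
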